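/- Let f and g be two C¹-diffeomorphisms of S¹ with the same irrational rotation number α, both having dense orbits. Assume that for any ε > 0 there exist a C¹-diffeomorphism g̃ that is ε-C¹-close to g, an integer n ∈ ℕ, and adapted orbit segments {x, f(x), …, fⁿ(x)} of f and {y, g̃(y), …, g̃ⁿ(y)} of g̃ that are similarly ordered and have the same initial and final ratios. Then there exists a sequence of C¹-diffeomorphisms h_n of S¹ such that h_n ∘ f ∘ h_n⁻¹ converges to g in the C¹ topology. -/

import Mathlib

open Set Filter

/-- `inArc a w b` : the point `w` (mod 1) lies strictly inside the positively oriented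
open arc of the circle `ℝ/ℤ` from `a` (mod 1) to `b` (mod 1). -/
def inArc (a w b : ℝ) : Prop :=
  0 < Int.fract (w - a) ∧ Int.fract (w - a) < Int.fract (b - a)

/-- A lift of an orientation-preserving `C¹`-diffeomorphism of the circle `S¹ = ℝ/ℤ`:
a `C¹` map `F : ℝ → ℝ` with `F (x+1) = F x + 1` and `F' > 0` everywhere. -/
structure CircleDiffeo where
  toFun : ℝ → ℝ
  contDiff : ContDiff ℝ 1 toFun
  deriv_pos : ∀ x : ℝ, 0 < deriv toFun x
  commute_translation : ∀ x : ℝ, toFun (x + 1) = toFun x + 1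

/-- `f` has rotation number (a lift of) `α`. -/
def hasRotationNumber (f : CircleDiffeo) (α : ℝ) : Prop :=
  Tendsto (fun n : ℕ => f.toFun^[n] 0 / (n : ℝ)) atTop (nhds α)

/-- The `C¹`-distance between (lifts of) circle maps : sup distance between the maps
plus sup distance between the derivatives (computed over a fundamental domain). -/
noncomputable def distC1 (f g : ℝ → ℝ) : ℝ :=
  (⨆ x : Icc (0:ℝ) 1, |f x.1 - g x.1|) + (⨆ x : Icc (0:ℝ) 1, |deriv f x.1 - deriv g x.1|)

/-- The orbit segment `x, F x, …, F^[n] x` is *adapted*, with final basic interval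
`[F^[i] x, F^[j] x]` and initial basic interval `[F^[n-j] x, F^[n-i] x]` (all viewed
on the circle `ℝ/ℤ`). -/
structure IsAdaptedSeg (F : ℝ → ℝ) (x : ℝ) (n i j : ℕ) : Prop where
  hi1 : 1 ≤ i
  hi2 : i ≤ n - 1
  hj1 : 1 ≤ j
  hj2 : j ≤ n - 1
  x_mem : inArc (F^[n - j] x) x (F^[n - i] x)
  x_only : ∀ k ≤ n, inArc (F^[n - j] x) (F^[k] x) (F^[n - i] x) → Int.fract (F^[k] x - x) = 0
  fn_mem : inArc (F^[i] x) (F^[n] x) (F^[j] x)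
  fn_only : ∀ k ≤ n, inArc (F^[i] x) (F^[k] x) (F^[j] x) → Int.fract (F^[k] x - F^[n] x) = 0
  adapted : i + j ≠ n - 1

/-- The initial ratio `R₀ = ℓ([a,x])/ℓ([x,b])` of an adapted orbit segment,
where `a = F^[n-j] x` and `b = F^[n-i] x`. -/
noncomputable def initialRatio (F : ℝ → ℝ) (x : ℝ) (n i j : ℕ) : ℝ :=
  Int.fract (x - F^[n - j] x) / Int.fract (F^[n - i] x - x)

/-- The final ratio `Rₙ = ℓ([c,Fⁿx])/ℓ([Fⁿx,d])` of an adapted orbit segment,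
where `c = F^[i] x` and `d = F^[j] x`. -/
noncomputable def finalRatio (F : ℝ → ℝ) (x : ℝ) (n i j : ℕ) : ℝ :=
  Int.fract (F^[n] x - F^[i] x) / Int.fract (F^[j] x - F^[n] x)

/-- Two finite sequences of points of the circle are similarly ordered: some
orientation-preserving circle homeomorphism (given by its lift `φ`) maps one to the other. -/
def SimilarlyOrdered (p q : ℕ → ℝ) (n : ℕ) : Prop :=
  ∃ φ : ℝ → ℝ, Continuous φ ∧ StrictMono φ ∧ (∀ z : ℝ, φ (z + 1) = φ z + 1) ∧
    ∀ k ≤ n, Int.fract (φ (p k) - q k) = 0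

/-- The (closed) circle arc from `u` to `v` contains no point of the orbit segment
`x, …, F^[n] x` in its interior: it is contained in the closure of a connected
component of the complement of the orbit segment. -/
def NoSegPointInside (F : ℝ → ℝ) (x : ℝ) (n : ℕ) (u v : ℝ) : Prop :=
  ∀ k ≤ n, ¬ inArc u (F^[k] x) v

/-- Every orbit of (the circle map induced by) `F` is dense in the circle. -/
def DenseOrbits (F : ℝ → ℝ) : Prop :=
  ∀ x : ℝ, Dense {z : ℝ | ∃ n : ℕ, Int.fract (F^[n] x - z) = 0}

namespace CircleDiffeo

instance : CoeFun CircleDiffeo (fun _ => ℝ → ℝ) := ⟨CircleDiffeo.toFun⟩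

theorem ext' {a b : CircleDiffeo} (h : ∀ x, a x = b x) : a = b := by
  cases a; cases b
  congr
  funext x
  exact h x

theorem strictMono (a : CircleDiffeo) : StrictMono a := strictMono_of_deriv_pos a.deriv_pos

theorem differentiable (a : CircleDiffeo) : Differentiable ℝ a :=
  a.contDiff.differentiable (by norm_num)

theorem continuous (a : CircleDiffeo) : Continuous a := a.contDiff.continuous

/-- The associated degree one lift. -/
def toLift (a : CircleDiffeo) : CircleDeg1Lift := ⟨⟨a, a.strictMono.monotone⟩, a.commute_translation⟩

theorem toLift_apply (a : CircleDiffeo) (x : ℝ) : a.toLift x = a x := rfl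

theorem surjective (a : CircleDiffeo) : Function.Surjective a :=
  a.continuous.surjective a.toLift.tendsto_atTop a.toLift.tendsto_atBot

/-- Derivative. -/
noncomputable def D (a : CircleDiffeo) (x : ℝ) : ℝ := deriv a.toFun x

theorem D_pos (a : CircleDiffeo) (x : ℝ) : 0 < a.D x := a.deriv_pos x

theorem hasDerivAt (a : CircleDiffeo) (x : ℝ) : HasDerivAt a (a.D x) x :=
  (a.differentiable x).hasDerivAt

theorem D_continuous (a : CircleDiffeo) : Continuous a.D :=
  (contDiff_one_iff_deriv.1 a.contDiff).2

theorem map_add_int (a : CircleDiffeo) (x : ℝ) (m : ℤ) : a (x + m) = a x + m :=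
  a.toLift.map_add_int x m

theorem D_periodic (a : CircleDiffeo) : Function.Periodic a.D 1 := by
  intro x
  have h : a.toFun = fun x => a.toFun (x + 1) - 1 := by
    funext x; rw [a.commute_translation]; ring
  unfold D
  conv_rhs => rw [h]
  rw [deriv_sub_const, deriv_comp_add_const]

/-- Construction from a derivative. -/
noncomputable def ofDeriv (F F' : ℝ → ℝ) (h : ∀ x, HasDerivAt F (F' x) x) (hc : Continuous F')
    (hp : ∀ x, 0 < F' x) (ht : ∀ x, F (x + 1) = F x + 1) : CircleDiffeo where
  toFun := F
  contDiff := by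
    refine contDiff_one_iff_deriv.2 ⟨fun x => (h x).differentiableAt, ?_⟩
    have : deriv F = F' := by funext x; exact (h x).deriv
    rw [this]; exact hc
  deriv_pos := fun x => by rw [(h x).deriv]; exact hp x
  commute_translation := ht

noncomputable instance : Mul CircleDiffeo := ⟨fun a b =>
  ofDeriv (fun x => a (b x)) (fun x => a.D (b x) * b.D x)
    (fun x => (a.hasDerivAt (b x)).comp x (b.hasDerivAt x))
    ((a.D_continuous.comp b.continuous).mul b.D_continuous)
    (fun x => mul_pos (a.D_pos _) (b.D_pos _))
    (fun x => by rw [b.commute_translation, a.commute_translation])⟩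

noncomputable instance : One CircleDiffeo := ⟨ofDeriv (fun x => x) (fun _ => 1) (fun x => hasDerivAt_id x)
  continuous_const (fun _ => one_pos) (fun _ => rfl)⟩

/-- The homeomorphism of the line. -/
noncomputable def homeo (a : CircleDiffeo) : ℝ ≃ₜ ℝ :=
  (StrictMono.orderIsoOfSurjective a a.strictMono a.surjective).toHomeomorph

theorem homeo_apply (a : CircleDiffeo) (x : ℝ) : a.homeo x = a x := rfl

noncomputable instance : Inv CircleDiffeo := ⟨fun a =>
  { toFun := a.homeo.symm
    contDiff := a.homeo.contDiff_symm_deriv (f' := a.D) (fun x => (a.D_pos x).ne')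
      (fun x => a.hasDerivAt x) a.contDiff
    deriv_pos := fun x => by
      have h := (a.hasDerivAt (a.homeo.symm x)).of_local_left_inverse (g := a.homeo.symm)
        a.homeo.symm.continuous.continuousAt (a.D_pos _).ne'
        (Eventually.of_forall fun y => a.homeo.apply_symm_apply y)
      rw [h.deriv]
      exact inv_pos.2 (a.D_pos _)
    commute_translation := fun x => by
      apply a.homeo.injective
      rw [a.homeo.apply_symm_apply, homeo_apply, a.commute_translation, ← homeo_apply,
        a.homeo.apply_symm_apply] }⟩

theorem mul_apply (a b : CircleDiffeo) (x : ℝ) : (a * b) x = a (b x) := rfl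
theorem one_apply (x : ℝ) : (1 : CircleDiffeo) x = x := rfl
theorem inv_apply_self' (a : CircleDiffeo) (x : ℝ) : (a⁻¹) (a x) = x :=
  a.homeo.symm_apply_apply x

noncomputable instance : Group CircleDiffeo := Group.ofLeftAxioms
  (fun _ _ _ => ext' fun _ => rfl) (fun _ => ext' fun _ => rfl)
  (fun a => ext' fun x => a.inv_apply_self' x)

theorem D_mul (a b : CircleDiffeo) (x : ℝ) : (a * b).D x = a.D (b x) * b.D x :=
  ((a.hasDerivAt (b x)).comp x (b.hasDerivAt x)).deriv

theorem D_one (x : ℝ) : (1 : CircleDiffeo).D x = 1 := (hasDerivAt_id x).deriv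

theorem inv_apply_self (a : CircleDiffeo) (x : ℝ) : (a⁻¹) (a x) = x := by
  rw [← mul_apply, inv_mul_cancel, one_apply]

theorem apply_inv_self (a : CircleDiffeo) (x : ℝ) : a ((a⁻¹) x) = x := by
  rw [← mul_apply, mul_inv_cancel, one_apply]

theorem D_inv (a : CircleDiffeo) (x : ℝ) : (a⁻¹).D (a x) = (a.D x)⁻¹ := by
  have h := D_mul a⁻¹ a x
  rw [inv_mul_cancel, D_one] at h
  exact eq_inv_of_mul_eq_one_left h.symm

theorem pow_apply (a : CircleDiffeo) (n : ℕ) (x : ℝ) : (a ^ n) x = a.toFun^[n] x := by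
  induction n generalizing x with
  | zero => rfl
  | succ n ih => rw [pow_succ, mul_apply, ih, Function.iterate_succ_apply]

end CircleDiffeo

theorem periodic_unifCont {φ : ℝ → ℝ} (hc : Continuous φ) (hp : Function.Periodic φ 1) :
    ∀ ε > 0, ∃ δ > 0, ∀ x y, |x - y| < δ → |φ x - φ y| < ε := by
  have h1 : UniformContinuous (hp.lift) := by
    have : Fact ((0:ℝ) < 1) := ⟨one_pos⟩
    apply CompactSpace.uniformContinuous_of_continuous
    exact continuous_coinduced_dom.mpr hc
  have h2 : UniformContinuous ((↑) : ℝ → AddCircle (1:ℝ)) :=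
    uniformContinuous_of_continuousAt_zero (QuotientAddGroup.mk' (AddSubgroup.zmultiples (1:ℝ)))
      (AddCircle.continuous_mk' 1).continuousAt
  have h3 : UniformContinuous φ := h1.comp h2
  intro ε hε
  obtain ⟨δ, hδ, h⟩ := Metric.uniformContinuous_iff.1 h3 ε hε
  exact ⟨δ, hδ, fun x y hxy => h hxy⟩

theorem periodic_bdd {φ : ℝ → ℝ} (hc : Continuous φ) (hp : Function.Periodic φ 1) :
    ∃ C > 0, ∀ x, |φ x| ≤ C := by
  obtain ⟨C, hC⟩ := (isCompact_Icc (a := (0:ℝ)) (b := 1)).exists_bound_of_continuousOn hc.continuousOn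
  refine ⟨max C 1, lt_max_of_lt_right one_pos, fun x => ?_⟩
  have h : φ (Int.fract x) = φ x := by
    have := hp.sub_int_mul_eq (x := x) ⌊x⌋
    rw [mul_one] at this
    exact this
  rw [← h]
  exact le_trans (hC _ ⟨Int.fract_nonneg x, (Int.fract_lt_one x).le⟩) (le_max_left _ _)

namespace CircleDiffeo

theorem no_periodic (a : CircleDiffeo) {α : ℝ} (hα : Irrational α) (h : hasRotationNumber a α) :
    ∀ k : ℕ, 0 < k → ∀ (w : ℝ) (m : ℤ), (a ^ k) w ≠ w + m := by
  intro k hk w m hw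
  have h1 : a.toLift.translationNumber = α := a.toLift.translationNumber_eq_of_tendsto₀ h
  have h2 : (a.toLift ^ k) w = w + m := by
    rw [CircleDeg1Lift.coe_pow]
    rw [pow_apply] at hw
    exact hw
  have h3 := a.toLift.translationNumber_of_map_pow_eq_add_int h2 hk
  rw [h1] at h3
  exact hα ⟨(m : ℚ) / k, by rw [h3]; push_cast; rfl⟩

theorem disp_periodic (a : CircleDiffeo) : Function.Periodic (fun x => a x - x) 1 := by
  intro x
  show a (x + 1) - (x + 1) = a x - x
  rw [a.commute_translation]; ring

/-- No quick returns. -/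
theorem no_return (a : CircleDiffeo)
    (hper : ∀ k : ℕ, 0 < k → ∀ (w : ℝ) (m : ℤ), (a ^ k) w ≠ w + m) (L : ℕ) :
    ∃ η > 0, ∀ k : ℕ, 0 < k → k < L → ∀ (w : ℝ) (m : ℤ), η ≤ |(a ^ k) w - w - m| := by
  have key : ∀ k : ℕ, 0 < k → ∃ η > 0, ∀ (w : ℝ) (m : ℤ), η ≤ |(a ^ k) w - w - m| := by
    intro k hk
    set S : Set ℝ := Set.range (Int.cast : ℤ → ℝ) with hS
    have hSc : IsClosed S := Int.isClosedEmbedding_coe_real.isClosed_range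
    have hSn : S.Nonempty := ⟨_, ⟨0, rfl⟩⟩
    have hcont : Continuous (fun w => Metric.infDist ((a ^ k) w - w) S) :=
      (Metric.continuous_infDist_pt S).comp ((a ^ k).continuous.sub continuous_id)
    have hpos : ∀ w, 0 < Metric.infDist ((a ^ k) w - w) S := by
      intro w
      rw [← Metric.infDist_pos_iff_notMem_closure hSn, hSc.closure_eq]
      rintro ⟨m, hm⟩
      exact hper k hk w m (by linarith)
    obtain ⟨w0, -, hw0⟩ := (isCompact_Icc (a := (0:ℝ)) (b := 1)).exists_isMinOn
      ⟨0, by simp⟩ hcont.continuousOn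
    refine ⟨_, hpos w0, fun w m => ?_⟩
    have h1 := isMinOn_iff.1 hw0 (Int.fract w) ⟨Int.fract_nonneg w, (Int.fract_lt_one w).le⟩
    refine h1.trans ?_
    have h2 : (a ^ k) (Int.fract w) - Int.fract w = (a ^ k) w - w := by
      have := (a ^ k).disp_periodic.sub_int_mul_eq (x := w) ⌊w⌋
      rw [mul_one] at this
      exact this
    rw [h2, ← Real.dist_eq]
    exact Metric.infDist_le_dist_of_mem ⟨m, rfl⟩
  induction L with
  | zero => exact ⟨1, one_pos, fun k _ h => absurd h (Nat.not_lt_zero _)⟩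
  | succ L ih =>
    obtain ⟨η, hη, h⟩ := ih
    rcases Nat.eq_zero_or_pos L with h0 | h0
    · exact ⟨1, one_pos, fun k h1 h2 => by omega⟩
    · obtain ⟨η', hη', h'⟩ := key L h0
      refine ⟨min η η', lt_min hη hη', fun k h1 h2 w m => ?_⟩
      rcases Nat.lt_succ_iff_lt_or_eq.1 h2 with h3 | h3
      · exact (min_le_left _ _).trans (h k h1 h3 w m)
      · subst h3; exact (min_le_right _ _).trans (h' w m)

/-- Total length of a block of images. -/
theorem block_sum (a : CircleDiffeo) (L : ℕ) (η : ℝ) (hη1 : η ≤ 1)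
    (hη : ∀ k : ℕ, 0 < k → k < L → ∀ (w : ℝ) (m : ℤ), η ≤ |(a ^ k) w - w - m|)
    (z z' : ℝ) (hz : z ≤ z') (hzz : z' < z + η) (b : ℕ) :
    ∑ i ∈ Finset.range L, ((a ^ (b + i)) z' - (a ^ (b + i)) z) ≤ 2 := by
  set fl : ℕ → ℤ := fun i => ⌊(a ^ (b + i)) z⌋ with hfl
  set I : ℕ → Set ℝ := fun i => Ioo ((a ^ (b + i)) z - fl i) ((a ^ (b + i)) z' - fl i) with hI
  have hlen : ∀ i, 0 ≤ (a ^ (b + i)) z' - (a ^ (b + i)) z := fun i =>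
    sub_nonneg.2 ((a ^ (b + i)).strictMono.monotone hz)
  have hpre : ∀ i, ∀ t ∈ I i, ∃ u, z < u ∧ u < z' ∧ (a ^ (b + i)) u = t + fl i := by
    intro i t ht
    obtain ⟨u, hu⟩ := (a ^ (b + i)).surjective (t + fl i)
    refine ⟨u, ?_, ?_, hu⟩
    · apply (a ^ (b + i)).strictMono.lt_iff_lt.1
      rw [hu]; linarith [ht.1]
    · apply (a ^ (b + i)).strictMono.lt_iff_lt.1
      rw [hu]; linarith [ht.2]
  have hdis : ∀ i i', i < i' → i' < L → Disjoint (I i) (I i') := by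
    intro i i' hii hi'
    rw [Set.disjoint_left]
    intro t ht ht'
    obtain ⟨u, hu1, hu2, hu3⟩ := hpre i t ht
    obtain ⟨v, hv1, hv2, hv3⟩ := hpre i' t ht'
    have e : (a ^ (i' - i)) v = u + ((fl i' - fl i : ℤ) : ℝ) := by
      apply (a ^ (b + i)).strictMono.injective
      rw [← mul_apply, ← pow_add, map_add_int, hu3]
      rw [show b + i + (i' - i) = b + i' by omega, hv3]
      push_cast; ring
    have := hη (i' - i) (by omega) (by omega) v (fl i' - fl i)
    rw [e] at this
    have h2 : |u - v| < η := by rw [abs_lt]; constructor <;> linarith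
    have h3 : u + ((fl i' - fl i : ℤ) : ℝ) - v - ((fl i' - fl i : ℤ) : ℝ) = u - v := by ring
    rw [h3] at this
    linarith
  have hsub : ∀ i, I i ⊆ Icc 0 2 := by
    intro i t ht
    have h1 : 0 ≤ (a ^ (b + i)) z - fl i := Int.fract_nonneg _
    have h2 : (a ^ (b + i)) z - fl i < 1 := Int.fract_lt_one _
    have h3 : (a ^ (b + i)) z' < (a ^ (b + i)) z + 1 := by
      rw [← (a ^ (b + i)).commute_translation]
      exact (a ^ (b + i)).strictMono (by linarith)
    exact ⟨by linarith [ht.1], by linarith [ht.2]⟩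
  have hm : MeasureTheory.volume (⋃ i ∈ Finset.range L, I i)
      = ∑ i ∈ Finset.range L, MeasureTheory.volume (I i) := by
    apply MeasureTheory.measure_biUnion_finset
    · intro i hi i' hi' hne
      simp only [Finset.coe_range, Set.mem_Iio] at hi hi'
      rcases lt_or_gt_of_ne hne with h | h
      · exact hdis i i' h hi'
      · exact (hdis i' i h hi).symm
    · intro i _; exact measurableSet_Ioo
  have hle : MeasureTheory.volume (⋃ i ∈ Finset.range L, I i) ≤ ENNReal.ofReal 2 := by
    calc _ ≤ MeasureTheory.volume (Icc (0:ℝ) 2) :=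
          MeasureTheory.measure_mono (Set.iUnion₂_subset fun i _ => hsub i)
      _ = ENNReal.ofReal 2 := by rw [Real.volume_Icc]; norm_num
  rw [hm] at hle
  have h4 : ∀ i, MeasureTheory.volume (I i)
      = ENNReal.ofReal ((a ^ (b + i)) z' - (a ^ (b + i)) z) := by
    intro i
    rw [hI]; simp only [Real.volume_Ioo]; congr 1; ring
  simp only [h4] at hle
  rw [← ENNReal.ofReal_sum_of_nonneg (fun i _ => hlen i)] at hle
  exact (ENNReal.ofReal_le_ofReal_iff (by norm_num)).1 hle

theorem log_D_pow (a : CircleDiffeo) (n : ℕ) (x : ℝ) :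
    Real.log ((a ^ n).D x) = ∑ k ∈ Finset.range n, Real.log (a.D ((a ^ k) x)) := by
  induction n with
  | zero => simp [D_one]
  | succ n ih =>
    rw [pow_succ', D_mul, Real.log_mul (a.D_pos _).ne' ((a ^ n).D_pos _).ne', ih,
      Finset.sum_range_succ, add_comm]

theorem log_D_continuous (a : CircleDiffeo) : Continuous (fun x => Real.log (a.D x)) :=
  a.D_continuous.log (fun x => (a.D_pos x).ne')

theorem log_D_periodic (a : CircleDiffeo) : Function.Periodic (fun x => Real.log (a.D x)) 1 := by
  intro x
  show Real.log (a.D (x + 1)) = _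
  rw [a.D_periodic]

/-- Nearby points have close Birkhoff sums. -/
theorem close_sums (a : CircleDiffeo)
    (hper : ∀ k : ℕ, 0 < k → ∀ (w : ℝ) (m : ℤ), (a ^ k) w ≠ w + m) (δ : ℝ) (hδ : 0 < δ) :
    ∃ η > 0, ∃ K, ∀ (n : ℕ) (z z' : ℝ), z ≤ z' → z' < z + η →
      |Real.log ((a ^ n).D z) - Real.log ((a ^ n).D z')| ≤ δ * n + K := by
  obtain ⟨C, hC0, hC⟩ := periodic_bdd a.log_D_continuous a.log_D_periodic
  obtain ⟨ε, hε, hu⟩ := periodic_unifCont a.log_D_continuous a.log_D_periodic (δ / 2) (by linarith)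
  have hlip : ∀ u v, |Real.log (a.D u) - Real.log (a.D v)| ≤ δ / 2 + 2 * C / ε * |u - v| := by
    intro u v
    rcases lt_or_ge (|u - v|) ε with h | h
    · have := (hu u v h).le
      have : 0 ≤ 2 * C / ε * |u - v| := by positivity
      linarith
    · have h1 : |Real.log (a.D u) - Real.log (a.D v)| ≤ 2 * C :=
        (abs_sub _ _).trans (by linarith [hC u, hC v])
      have h2 : 2 * C ≤ 2 * C / ε * |u - v| := by
        rw [div_mul_eq_mul_div, le_div_iff₀ hε]
        exact mul_le_mul_of_nonneg_left h (by linarith)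
      linarith
  obtain ⟨L, hL⟩ := exists_nat_gt (8 * C / ε / δ)
  have hL0 : 0 < L := by
    have : (0:ℝ) < L := lt_of_le_of_lt (by positivity) hL
    exact_mod_cast this
  have hL1 : (0:ℝ) < L := by exact_mod_cast hL0
  obtain ⟨η0, hη0, hη⟩ := a.no_return hper L
  refine ⟨min η0 1, lt_min hη0 one_pos, 8 * C / ε, fun n z z' hz hzz => ?_⟩
  have hblock := a.block_sum L (min η0 1) (min_le_right _ _)
    (fun k h1 h2 w m => (min_le_left _ _).trans (hη k h1 h2 w m)) z z' hz hzz
  have hlen : ∀ i, 0 ≤ (a ^ i) z' - (a ^ i) z := fun i =>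
    sub_nonneg.2 ((a ^ i).strictMono.monotone hz)
  have hmul : ∀ M : ℕ, ∑ i ∈ Finset.range (L * M), ((a ^ i) z' - (a ^ i) z) ≤ 2 * M := by
    intro M
    induction M with
    | zero => simp
    | succ M ih =>
      rw [Nat.mul_succ, Finset.sum_range_add]
      have := hblock (L * M)
      push_cast; linarith
  have hn : ∑ i ∈ Finset.range n, ((a ^ i) z' - (a ^ i) z) ≤ 2 * (n / L + 1) := by
    calc _ ≤ ∑ i ∈ Finset.range (L * (n / L + 1)), ((a ^ i) z' - (a ^ i) z) := by
          apply Finset.sum_le_sum_of_subset_of_nonneg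
          · intro i hi
            rw [Finset.mem_range] at hi ⊢
            exact hi.trans (Nat.lt_mul_div_succ n hL0)
          · intro i _ _; exact hlen i
      _ ≤ 2 * ((n / L + 1 : ℕ) : ℝ) := hmul _
      _ ≤ 2 * (n / L + 1) := by
          push_cast
          have : ((n / L : ℕ) : ℝ) ≤ n / L := Nat.cast_div_le
          linarith
  rw [log_D_pow, log_D_pow, ← Finset.sum_sub_distrib]
  calc _ ≤ ∑ k ∈ Finset.range n, |Real.log (a.D ((a ^ k) z)) - Real.log (a.D ((a ^ k) z'))| :=
        Finset.abs_sum_le_sum_abs _ _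
    _ ≤ ∑ k ∈ Finset.range n, (δ / 2 + 2 * C / ε * ((a ^ k) z' - (a ^ k) z)) := by
        apply Finset.sum_le_sum
        intro k _
        refine (hlip _ _).trans ?_
        rw [abs_sub_comm, abs_of_nonneg (hlen k)]
    _ = n * (δ / 2) + 2 * C / ε * ∑ k ∈ Finset.range n, ((a ^ k) z' - (a ^ k) z) := by
        rw [Finset.sum_add_distrib, ← Finset.mul_sum]; simp
    _ ≤ n * (δ / 2) + 2 * C / ε * (2 * (n / L + 1)) := by gcongr
    _ = n * (δ / 2) + 4 * C / ε / L * n + 4 * C / ε := by field_simp; ring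
    _ ≤ δ * n + 8 * C / ε := by
        have h1 : 4 * C / ε / L ≤ δ / 2 := by
          rw [div_le_iff₀ hL1]
          rw [div_lt_iff₀ hδ] at hL
          have : 8 * C / ε = 2 * (4 * C / ε) := by ring
          linarith
        have h2 : 4 * C / ε / L * n ≤ δ / 2 * n := by gcongr
        have h3 : 4 * C / ε ≤ 8 * C / ε := by gcongr; norm_num
        linarith

theorem exists_D_eq_one (a : CircleDiffeo) : ∃ x, a.D x = 1 := by
  obtain ⟨c, -, hc⟩ := exists_deriv_eq_slope a.toFun (a := 0) (b := 1) one_pos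
    a.continuous.continuousOn a.differentiable.differentiableOn
  refine ⟨c, hc.trans ?_⟩
  have := a.commute_translation 0
  rw [zero_add] at this
  rw [this]; ring

theorem log_D_pow_bound (a : CircleDiffeo) {C : ℝ} (hC : ∀ x, |Real.log (a.D x)| ≤ C) (n : ℕ)
    (x : ℝ) : |Real.log ((a ^ n).D x)| ≤ n * C := by
  rw [log_D_pow]
  refine (Finset.abs_sum_le_sum_abs _ _).trans ?_
  refine (Finset.sum_le_sum (fun k _ => hC _)).trans ?_
  simp

theorem dense_finite (a : CircleDiffeo) (hd : DenseOrbits a) (η : ℝ) (hη : 0 < η) :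
    ∃ M : ℕ, ∀ x, ∃ m ≤ M, ∃ p : ℤ, |x - ((a ^ m) 0 + p)| < η := by
  obtain ⟨t, ht⟩ := (isCompact_Icc (a := (0:ℝ)) (b := 1)).elim_finite_subcover
    (fun n : ℕ => ⋃ p : ℤ, Metric.ball ((a ^ n) 0 + p) η)
    (fun n => isOpen_iUnion fun p => Metric.isOpen_ball) (by
      intro x _
      obtain ⟨z, ⟨n, hn⟩, hz⟩ := (hd 0).exists_dist_lt x hη
      rw [Int.fract_eq_iff] at hn
      obtain ⟨-, -, p, hp⟩ := hn
      refine mem_iUnion.2 ⟨n, mem_iUnion.2 ⟨-p, ?_⟩⟩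
      rw [Metric.mem_ball, pow_apply]
      have : a.toFun^[n] 0 + ((-p : ℤ) : ℝ) = z := by push_cast; linarith
      rw [this]; exact hz)
  refine ⟨t.sup id, fun x => ?_⟩
  have := ht (show Int.fract x ∈ Icc (0:ℝ) 1 from ⟨Int.fract_nonneg x, (Int.fract_lt_one x).le⟩)
  obtain ⟨m, hm, h⟩ := mem_iUnion₂.1 this
  obtain ⟨p, hp⟩ := mem_iUnion.1 h
  refine ⟨m, Finset.le_sup (f := id) hm, p + ⌊x⌋, ?_⟩
  rw [Metric.mem_ball, Real.dist_eq] at hp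
  have e : x - ((a ^ m) 0 + ((p + ⌊x⌋ : ℤ) : ℝ)) = Int.fract x - ((a ^ m) 0 + p) := by
    rw [← Int.self_sub_floor]; push_cast; ring
  rw [e]; exact hp

theorem D_add_int (a : CircleDiffeo) (x : ℝ) (p : ℤ) : a.D (x + p) = a.D x := by
  have := a.D_periodic.int_mul p x
  rwa [mul_one] at this

theorem subexp_nat (a : CircleDiffeo)
    (hper : ∀ k : ℕ, 0 < k → ∀ (w : ℝ) (m : ℤ), (a ^ k) w ≠ w + m) (hd : DenseOrbits a)
    (δ : ℝ) (hδ : 0 < δ) :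
    ∃ K, ∀ (n : ℕ) (x : ℝ), |Real.log ((a ^ n).D x)| ≤ δ * n + K := by
  obtain ⟨C, hC0, hC⟩ := periodic_bdd a.log_D_continuous a.log_D_periodic
  obtain ⟨η, hη, K, hK⟩ := a.close_sums hper (δ / 2) (by linarith)
  obtain ⟨M, hM⟩ := a.dense_finite hd η hη
  have hK' : ∀ (n : ℕ) (z z' : ℝ), |z - z'| < η →
      |Real.log ((a ^ n).D z) - Real.log ((a ^ n).D z')| ≤ δ / 2 * n + K := by
    intro n z z' h
    rw [abs_lt] at h
    rcases le_total z z' with h1 | h1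
    · exact hK n z z' h1 (by linarith)
    · rw [abs_sub_comm]; exact hK n z' z h1 (by linarith)
  have hx0 : ∀ (n : ℕ) (x : ℝ),
      |Real.log ((a ^ n).D x) - Real.log ((a ^ n).D 0)| ≤ δ / 2 * n + K + 2 * (M * C) := by
    intro n x
    obtain ⟨m, hm, p, hp⟩ := hM x
    have h1 := hK' n _ _ hp
    rw [D_add_int] at h1
    have h2 : (a ^ n).D ((a ^ m) 0) * (a ^ m).D 0 = (a ^ m).D ((a ^ n) 0) * (a ^ n).D 0 := by
      rw [← D_mul, ← D_mul, ← pow_add, ← pow_add, add_comm]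
    have h3 := congrArg Real.log h2
    rw [Real.log_mul (D_pos _ _).ne' (D_pos _ _).ne',
      Real.log_mul (D_pos _ _).ne' (D_pos _ _).ne'] at h3
    have h4 := abs_le.1 (a.log_D_pow_bound hC m 0)
    have h5 := abs_le.1 (a.log_D_pow_bound hC m ((a ^ n) 0))
    have h6 : (m : ℝ) * C ≤ M * C := by gcongr
    rw [abs_le] at h1 ⊢
    constructor <;> linarith [h1.1, h1.2, h4.1, h4.2, h5.1, h5.2]
  refine ⟨2 * (K + 2 * (M * C)), fun n x => ?_⟩
  obtain ⟨y, hy⟩ := (a ^ n).exists_D_eq_one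
  have h1 := abs_le.1 (hx0 n x)
  have h2 := abs_le.1 (hx0 n y)
  rw [hy, Real.log_one] at h2
  rw [abs_le]
  constructor <;> linarith [h1.1, h1.2, h2.1, h2.2]

theorem subexp (a : CircleDiffeo)
    (hper : ∀ k : ℕ, 0 < k → ∀ (w : ℝ) (m : ℤ), (a ^ k) w ≠ w + m) (hd : DenseOrbits a)
    (δ : ℝ) (hδ : 0 < δ) :
    ∃ K > 0, ∀ (j : ℤ) (x : ℝ), (a ^ j).D x ≤ K * Real.exp (δ * |(j : ℝ)|) := by
  obtain ⟨K, hK⟩ := a.subexp_nat hper hd δ hδ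
  refine ⟨Real.exp K, Real.exp_pos _, fun j x => ?_⟩
  rw [← Real.exp_add, ← Real.log_le_iff_le_exp (D_pos _ _)]
  obtain ⟨n, rfl | rfl⟩ := j.eq_nat_or_neg
  · rw [zpow_natCast]
    have := (abs_le.1 (hK n x)).2
    simp only [Int.cast_natCast, Nat.abs_cast]
    linarith
  · obtain ⟨y, rfl⟩ := (a ^ n).surjective x
    rw [zpow_neg, zpow_natCast, D_inv, Real.log_inv]
    have := (abs_le.1 (hK n y)).1
    simp only [Int.cast_neg, Int.cast_natCast, abs_neg, Nat.abs_cast]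
    linarith

end CircleDiffeo

open CircleDiffeo

theorem exists_semiconj {α : ℝ} (f g : CircleDiffeo)
    (hf : hasRotationNumber f α) (hg : hasRotationNumber g α) (hgd : DenseOrbits g) :
    ∃ ψ : ℝ → ℝ, Continuous ψ ∧ Monotone ψ ∧ (∀ x, ψ (x + 1) = ψ x + 1) ∧
      ∀ x, ψ (f x) = g (ψ x) := by
  have h1 : f.toLift.translationNumber = α := f.toLift.translationNumber_eq_of_tendsto₀ hf
  have h2 : g.toLift.translationNumber = α := g.toLift.translationNumber_eq_of_tendsto₀ hg
  obtain ⟨ψ, hψ⟩ := CircleDeg1Lift.semiconj_of_bijective_of_translationNumber_eq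
    (f₁ := f.toLift) (f₂ := g.toLift) ⟨f.strictMono.injective, f.surjective⟩
    ⟨g.strictMono.injective, g.surjective⟩ (h1.trans h2.symm)
  have hs : ∀ x, ψ (f x) = g (ψ x) := hψ
  refine ⟨ψ, ?_, ψ.monotone, ψ.map_add_one, hs⟩
  apply ψ.monotone.continuous_of_denseRange
  refine (hgd (ψ 0)).mono ?_
  rintro z ⟨n, hn⟩
  rw [Int.fract_eq_iff] at hn
  obtain ⟨-, -, p, hp⟩ := hn
  have hit : ∀ n : ℕ, ψ (f.toFun^[n] 0) = g.toFun^[n] (ψ 0) := by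
    intro n
    induction n with
    | zero => rfl
    | succ n ih => rw [Function.iterate_succ_apply', Function.iterate_succ_apply', hs, ih]
  refine ⟨f.toFun^[n] 0 + ((-p : ℤ) : ℝ), ?_⟩
  rw [ψ.map_add_int, hit]
  push_cast
  linarith

theorem semiconj_zpow {f g : CircleDiffeo} {ψ : ℝ → ℝ} (h : ∀ x, ψ (f x) = g (ψ x)) (j : ℤ)
    (x : ℝ) : ψ ((f ^ j) x) = (g ^ j) (ψ x) := by
  have hn : ∀ (n : ℕ) (x : ℝ), ψ ((f ^ n) x) = (g ^ n) (ψ x) := by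
    intro n
    induction n with
    | zero => intro x; rfl
    | succ n ih => intro x; rw [pow_succ', pow_succ', mul_apply, mul_apply, h, ih]
  obtain ⟨n, rfl | rfl⟩ := j.eq_nat_or_neg
  · rw [zpow_natCast, zpow_natCast, hn]
  · rw [zpow_neg, zpow_neg, zpow_natCast, zpow_natCast]
    obtain ⟨y, rfl⟩ := (f ^ n).surjective x
    rw [inv_apply_self, hn, inv_apply_self]

theorem deg_one_unifCont {ψ : ℝ → ℝ} (hc : Continuous ψ) (h1 : ∀ x, ψ (x + 1) = ψ x + 1) :
    ∀ ε > 0, ∃ δ > 0, ∀ x y, |x - y| < δ → |ψ x - ψ y| < ε := by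
  intro ε hε
  obtain ⟨δ, hδ, h⟩ := periodic_unifCont (φ := fun x => ψ x - x) (hc.sub continuous_id)
    (fun x => by simp only [h1]; ring) (ε / 2) (by linarith)
  refine ⟨min δ (ε / 2), lt_min hδ (by linarith), fun x y hxy => ?_⟩
  have h2 := abs_lt.1 (h x y (hxy.trans_le (min_le_left _ _)))
  have h3 := abs_lt.1 (hxy.trans_le (min_le_right _ _))
  rw [abs_lt]
  constructor <;> linarith [h2.1, h2.2, h3.1, h3.2]

/-- Approximation of monotone degree one maps by diffeomorphisms. -/
theorem exists_approx {ψ : ℝ → ℝ} (hc : Continuous ψ) (hm : Monotone ψ)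
    (h1 : ∀ x, ψ (x + 1) = ψ x + 1) (η : ℝ) (hη : 0 < η) :
    ∃ k : CircleDiffeo, ∀ x, |k x - ψ x| ≤ η := by
  obtain ⟨C, hC0, hC⟩ := periodic_bdd (φ := fun x => x - ψ x) (continuous_id.sub hc)
    (fun x => by simp only [h1]; ring)
  obtain ⟨δ, hδ, hu⟩ := deg_one_unifCont hc h1 (η / 2) (by linarith)
  set r := δ / 2 with hr
  have hr0 : 0 < r := by positivity
  set θ := min (1 / 2) (η / (2 * C)) with hθ
  have hθ0 : 0 < θ := by positivity
  have hθ1 : θ < 1 := (min_le_left _ _).trans_lt (by norm_num)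
  have hθC : θ * C ≤ η / 2 := by
    calc θ * C ≤ η / (2 * C) * C := by gcongr; exact min_le_right _ _
      _ = η / 2 := by field_simp
  set A : ℝ → ℝ := fun x => ∫ t in (0:ℝ)..x, ψ t with hA
  have hAd : ∀ x, HasDerivAt A (ψ x) x := fun x =>
    (hc.integral_hasStrictDerivAt 0 x).hasDerivAt
  have hAsub : ∀ x y, A y - A x = ∫ t in x..y, ψ t := fun x y =>
    intervalIntegral.integral_interval_sub_left (hc.intervalIntegrable _ _)
      (hc.intervalIntegrable _ _)
  have hAr : ∀ x, HasDerivAt (fun x => A (x + r)) (ψ (x + r)) x := fun x =>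
    (hAd (x + r)).comp_add_const x r
  refine ⟨ofDeriv (fun x => (1 - θ) * ((A (x + r) - A x) / r) + θ * x)
    (fun x => (1 - θ) * ((ψ (x + r) - ψ x) / r) + θ) ?_ ?_ ?_ ?_, ?_⟩
  · intro x
    have := ((((hAr x).sub (hAd x)).div_const r).const_mul (1 - θ)).add
      ((hasDerivAt_id x).const_mul θ)
    rw [mul_one] at this
    exact this
  · fun_prop
  · intro x
    have h2 : 0 ≤ ψ (x + r) - ψ x := sub_nonneg.2 (hm (by linarith))
    have h3 : 0 ≤ 1 - θ := by linarith
    positivity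
  · intro x
    have e : A (x + 1 + r) - A (x + 1) = A (x + r) - A x + r := by
      rw [hAsub, hAsub]
      have e1 : ∫ t in (x + 1)..(x + 1 + r), ψ t = ∫ t in x..(x + r), ψ (t + 1) := by
        rw [intervalIntegral.integral_comp_add_right (fun t => ψ t)]
        congr 1; ring
      rw [e1]
      simp only [h1]
      rw [intervalIntegral.integral_add (hc.intervalIntegrable _ _)
        (continuous_const.intervalIntegrable _ _)]
      simp
    rw [e]; field_simp; ring
  · intro x
    show |(1 - θ) * ((A (x + r) - A x) / r) + θ * x - ψ x| ≤ η
    have hlo : ψ x * r ≤ A (x + r) - A x := by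
      rw [hAsub]
      have : ∫ t in x..(x + r), ψ x = ψ x * r := by simp [mul_comm]
      rw [← this]
      apply intervalIntegral.integral_mono_on (by linarith)
        (continuous_const.intervalIntegrable _ _) (hc.intervalIntegrable _ _)
      intro t ht; exact hm ht.1
    have hhi : A (x + r) - A x ≤ ψ (x + r) * r := by
      rw [hAsub]
      have : ∫ t in x..(x + r), ψ (x + r) = ψ (x + r) * r := by simp [mul_comm]
      rw [← this]
      apply intervalIntegral.integral_mono_on (by linarith)
        (hc.intervalIntegrable _ _) (continuous_const.intervalIntegrable _ _)
      intro t ht; exact hm ht.2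
    rw [← le_div_iff₀ hr0] at hlo
    rw [← div_le_iff₀ hr0] at hhi
    have h2 := (abs_lt.1 (hu (x + r) x (by rw [add_sub_cancel_left, abs_of_pos hr0]; linarith))).2
    set q := (A (x + r) - A x) / r
    have h3 := abs_le.1 (hC x)
    have h4 : θ * (x - ψ x) ≤ η / 2 := le_trans (by gcongr; exact h3.2) hθC
    have h5 : -(η / 2) ≤ θ * (x - ψ x) := by
      have : θ * (-C) ≤ θ * (x - ψ x) := by gcongr; exact h3.1
      linarith
    have h6 : 0 ≤ (1 - θ) * (q - ψ x) := mul_nonneg (by linarith) (by linarith)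
    have h7 : (1 - θ) * (q - ψ x) ≤ 1 * (η / 2) := by
      apply mul_le_mul <;> linarith
    have e : (1 - θ) * q + θ * x - ψ x = (1 - θ) * (q - ψ x) + θ * (x - ψ x) := by ring
    rw [e, abs_le]
    constructor <;> linarith

/-- Densities. -/
noncomputable def Tden (f g : CircleDiffeo) (ψ : ℝ → ℝ) (k : CircleDiffeo) (j : ℤ) (x : ℝ) : ℝ :=
  (g ^ (-j)).D (ψ ((f ^ j) x)) * (k * f ^ j).D x

theorem Tden_pos (f g : CircleDiffeo) (ψ : ℝ → ℝ) (k : CircleDiffeo) (j : ℤ) (x : ℝ) :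
    0 < Tden f g ψ k j x := mul_pos (D_pos _ _) (D_pos _ _)

theorem Tden_continuous (f g : CircleDiffeo) {ψ : ℝ → ℝ} (hc : Continuous ψ) (k : CircleDiffeo)
    (j : ℤ) : Continuous (Tden f g ψ k j) :=
  ((g ^ (-j)).D_continuous.comp (hc.comp (f ^ j).continuous)).mul (D_continuous _)

theorem Tden_periodic (f g : CircleDiffeo) {ψ : ℝ → ℝ} (h1 : ∀ x, ψ (x + 1) = ψ x + 1)
    (k : CircleDiffeo) (j : ℤ) : Function.Periodic (Tden f g ψ k j) 1 := by
  intro x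
  unfold Tden
  rw [D_periodic, (f ^ j).commute_translation, h1, D_periodic]

theorem Tden_shift {f g : CircleDiffeo} {ψ : ℝ → ℝ} (h : ∀ x, ψ (f x) = g (ψ x))
    (k : CircleDiffeo) (j : ℤ) (x : ℝ) :
    Tden f g ψ k j (f x) * f.D x = g.D (ψ x) * Tden f g ψ k (j + 1) x := by
  unfold Tden
  have e1 : (k * f ^ (j + 1)).D x = (k * f ^ j).D (f x) * f.D x := by
    rw [← D_mul, zpow_add_one, mul_assoc]
  have e2 : (f ^ j) (f x) = (f ^ (j + 1)) x := by rw [zpow_add_one, mul_apply]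
  have e3 : g ^ (-j) = g * g ^ (-(j + 1)) := by
    rw [← zpow_one_add]; congr 1; ring
  have e4 : (g ^ (-(j + 1))) (ψ ((f ^ (j + 1)) x)) = ψ x := by
    rw [semiconj_zpow h, zpow_neg, inv_apply_self]
  rw [e1, e2, e3, D_mul, e4]; ring

/-- Bound for integrals of the densities. -/
theorem Tden_integral_bound (f g : CircleDiffeo) {ψ : ℝ → ℝ} (hc : Continuous ψ)
    (k : CircleDiffeo) (j : ℤ) (B : ℝ) (hB : ∀ y, (g ^ (-j)).D y ≤ B) (x : ℝ) (hx0 : 0 ≤ x)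
    (hx1 : x ≤ 1) : 0 ≤ ∫ t in (0:ℝ)..x, Tden f g ψ k j t ∧
      ∫ t in (0:ℝ)..x, Tden f g ψ k j t ≤ B := by
  constructor
  · exact intervalIntegral.integral_nonneg hx0 (fun t _ => (Tden_pos f g ψ k j t).le)
  · have hB0 : 0 ≤ B := (D_pos _ _).le.trans (hB 0)
    calc _ ≤ ∫ t in (0:ℝ)..x, B * (k * f ^ j).D t := by
          apply intervalIntegral.integral_mono_on hx0
            ((Tden_continuous f g hc k j).intervalIntegrable _ _)
            (((D_continuous _).const_mul B).intervalIntegrable _ _)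
          intro t _
          exact mul_le_mul_of_nonneg_right (hB _) (D_pos _ _).le
      _ = B * ((k * f ^ j) x - (k * f ^ j) 0) := by
          rw [intervalIntegral.integral_const_mul,
            intervalIntegral.integral_eq_sub_of_hasDerivAt (fun t _ => hasDerivAt _ t)
              ((D_continuous _).intervalIntegrable _ _)]
      _ ≤ B * 1 := by
          gcongr
          have h1 := (k * f ^ j).strictMono.monotone hx1
          have h2 := (k * f ^ j).commute_translation 0
          rw [zero_add] at h2
          linarith
      _ = B := mul_one B

theorem Tden_integral_close (f g : CircleDiffeo) {ψ : ℝ → ℝ} (hc : Continuous ψ)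
    (h : ∀ x, ψ (f x) = g (ψ x)) (j : ℤ) (ε : ℝ) (hε : 0 < ε) :
    ∃ η > 0, ∀ k : CircleDiffeo, (∀ x, |k x - ψ x| < η) → ∀ x, 0 ≤ x → x ≤ 1 →
      |(∫ t in (0:ℝ)..x, Tden f g ψ k j t) - (ψ x - ψ 0)| ≤ ε := by
  obtain ⟨η1, hη1, hu1⟩ := periodic_unifCont (g ^ (-j)).D_continuous (g ^ (-j)).D_periodic
    (ε / 3) (by linarith)
  obtain ⟨η2, hη2, hu2⟩ := deg_one_unifCont (g ^ (-j)).continuous (g ^ (-j)).commute_translation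
    (ε / 3) (by linarith)
  refine ⟨min η1 η2, lt_min hη1 hη2, fun k hk x hx0 hx1 => ?_⟩
  set p := k * f ^ j with hp
  have hps : ∀ s, p s = k ((f ^ j) s) := fun s => rfl
  have hback : ∀ s, (g ^ (-j)) (ψ ((f ^ j) s)) = ψ s := fun s => by
    rw [semiconj_zpow h, zpow_neg, inv_apply_self]
  have hint : ∫ t in (0:ℝ)..x, (g ^ (-j) * p).D t = (g ^ (-j)) (p x) - (g ^ (-j)) (p 0) :=
    intervalIntegral.integral_eq_sub_of_hasDerivAt (fun t _ => (g ^ (-j) * p).hasDerivAt t)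
      ((D_continuous _).intervalIntegrable _ _)
  have hcl : ∀ s, |(g ^ (-j)) (p s) - ψ s| < ε / 3 := by
    intro s
    have := hu2 (p s) (ψ ((f ^ j) s)) ((hk _).trans_le (min_le_right _ _))
    rwa [hback] at this
  have hdiff : |(∫ t in (0:ℝ)..x, Tden f g ψ k j t) - ∫ t in (0:ℝ)..x, (g ^ (-j) * p).D t|
      ≤ ε / 3 := by
    rw [← intervalIntegral.integral_sub ((Tden_continuous f g hc k j).intervalIntegrable _ _)
      ((D_continuous _).intervalIntegrable _ _)]
    calc _ ≤ ∫ t in (0:ℝ)..x, |Tden f g ψ k j t - (g ^ (-j) * p).D t| :=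
          intervalIntegral.abs_integral_le_integral_abs hx0
      _ ≤ ∫ t in (0:ℝ)..x, ε / 3 * p.D t := by
          apply intervalIntegral.integral_mono_on hx0
            (((Tden_continuous f g hc k j).sub (D_continuous _)).abs.intervalIntegrable _ _)
            (((D_continuous _).const_mul _).intervalIntegrable _ _)
          intro t _
          show |(g ^ (-j)).D (ψ ((f ^ j) t)) * p.D t - (g ^ (-j) * p).D t| ≤ ε / 3 * p.D t
          rw [D_mul (g ^ (-j)) p, ← sub_mul, abs_mul, abs_of_pos (p.D_pos t)]
          apply mul_le_mul_of_nonneg_right _ (p.D_pos t).le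
          rw [abs_sub_comm]
          exact (hu1 _ _ ((hk _).trans_le (min_le_left _ _))).le
      _ = ε / 3 * (p x - p 0) := by
          rw [intervalIntegral.integral_const_mul,
            intervalIntegral.integral_eq_sub_of_hasDerivAt (fun t _ => p.hasDerivAt t)
              ((D_continuous _).intervalIntegrable _ _)]
      _ ≤ ε / 3 * 1 := by
          gcongr
          have h1 := p.strictMono.monotone hx1
          have h2 := p.commute_translation 0
          rw [zero_add] at h2
          linarith
      _ = ε / 3 := mul_one _
  rw [hint] at hdiff
  have h1 := abs_le.1 hdiff
  have h2 := abs_lt.1 (hcl x)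
  have h3 := abs_lt.1 (hcl 0)
  rw [abs_le]
  constructor <;> linarith [h1.1, h1.2, h2.1, h2.2, h3.1, h3.2]

theorem summable_exp_abs (c : ℝ) (hc : 0 < c) : Summable (fun j : ℤ => Real.exp (-c * |(j : ℝ)|)) := by
  have h : Summable (fun n : ℕ => Real.exp (-c * (n : ℝ))) := by
    have := Real.summable_exp_nat_mul_iff (a := -c) |>.2 (by linarith)
    simpa [mul_comm] using this
  apply Summable.of_nat_of_neg
  · simpa using h
  · simpa using h

theorem main_construction (f g : CircleDiffeo) {ψ : ℝ → ℝ} (hc : Continuous ψ) (hm : Monotone ψ)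
    (h1 : ∀ x, ψ (x + 1) = ψ x + 1) (h : ∀ x, ψ (f x) = g (ψ x))
    (hfs : ∀ δ > 0, ∃ K > 0, ∀ (j : ℤ) (x : ℝ), (f ^ j).D x ≤ K * Real.exp (δ * |(j : ℝ)|))
    (hgs : ∀ δ > 0, ∃ K > 0, ∀ (j : ℤ) (x : ℝ), (g ^ j).D x ≤ K * Real.exp (δ * |(j : ℝ)|))
    (η : ℝ) (hη : 0 < η) :
    ∃ k : CircleDiffeo, (∀ x, |k x - ψ x| ≤ η) ∧
      ∀ x, Real.exp (-η) * (g.D (ψ x) * k.D x) ≤ k.D (f x) * f.D x ∧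
        k.D (f x) * f.D x ≤ Real.exp η * (g.D (ψ x) * k.D x) := by
  obtain ⟨Kf, hKf0, hKf⟩ := hfs (η / 4) (by linarith)
  obtain ⟨Kg, hKg0, hKg⟩ := hgs (η / 4) (by linarith)
  have hKg' : ∀ (j : ℤ) (y : ℝ), (g ^ (-j)).D y ≤ Kg * Real.exp (η / 4 * |(j : ℝ)|) := by
    intro j y
    have := hKg (-j) y
    simpa using this
  set a : ℤ → ℝ := fun j => Real.exp (-η * |(j : ℝ)|) with ha
  have ha0 : ∀ j, 0 < a j := fun j => Real.exp_pos _
  have hasum : Summable a := summable_exp_abs η hη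
  set S := ∑' j, a j with hS
  have hS1 : 1 ≤ S := by
    have : a 0 ≤ S := hasum.le_tsum 0 (fun j _ => (ha0 j).le)
    simpa [ha] using this
  -- approximating sequence
  have happ : ∀ m : ℕ, ∃ k : CircleDiffeo, ∀ x, |k x - ψ x| ≤ 1 / ((m : ℝ) + 1) := fun m =>
    exists_approx hc hm h1 _ (by positivity)
  choose k hk using happ
  set E : ℕ → ℤ → ℝ := fun m j =>
    ⨆ x : Icc (0:ℝ) 1, |(∫ t in (0:ℝ)..x.1, Tden f g ψ (k m) j t) - (ψ x.1 - ψ 0)| with hE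
  have hψ01 : ∀ x, 0 ≤ x → x ≤ 1 → 0 ≤ ψ x - ψ 0 ∧ ψ x - ψ 0 ≤ 1 := by
    intro x hx0 hx1
    have e1 := hm hx0
    have e2 := hm hx1
    have e3 := h1 0
    rw [zero_add] at e3
    constructor <;> linarith
  set B : ℤ → ℝ := fun j => Kg * Real.exp (η / 4 * |(j : ℝ)|) + 1 with hB
  have hEB : ∀ m j, ∀ x : Icc (0:ℝ) 1,
      |(∫ t in (0:ℝ)..x.1, Tden f g ψ (k m) j t) - (ψ x.1 - ψ 0)| ≤ B j := by
    intro m j x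
    have e1 := Tden_integral_bound f g hc (k m) j _ (hKg' j) x.1 x.2.1 x.2.2
    have e2 := hψ01 x.1 x.2.1 x.2.2
    have e3 : 0 < Kg * Real.exp (η / 4 * |(j : ℝ)|) := by positivity
    rw [abs_le]
    constructor
    · simp only [hB]; linarith [e1.1, e2.2]
    · simp only [hB]; linarith [e1.2, e2.1]
  have hne : Nonempty (Icc (0:ℝ) 1) := ⟨⟨0, by simp⟩⟩
  have hEle : ∀ m j, E m j ≤ B j := fun m j => ciSup_le (hEB m j)
  have hE0 : ∀ m j, 0 ≤ E m j := fun m j => Real.iSup_nonneg (fun x => abs_nonneg _)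
  have hEx : ∀ m j x, 0 ≤ x → x ≤ 1 →
      |(∫ t in (0:ℝ)..x, Tden f g ψ (k m) j t) - (ψ x - ψ 0)| ≤ E m j := by
    intro m j x hx0 hx1
    exact le_ciSup (f := fun x : Icc (0:ℝ) 1 =>
      |(∫ t in (0:ℝ)..x.1, Tden f g ψ (k m) j t) - (ψ x.1 - ψ 0)|)
      ⟨B j, by rintro _ ⟨x, rfl⟩; exact hEB m j x⟩ ⟨x, hx0, hx1⟩
  have hElim : ∀ j, Tendsto (fun m => E m j) atTop (nhds 0) := by
    intro j
    rw [Metric.tendsto_atTop]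
    intro ε hε
    obtain ⟨η', hη', hcl⟩ := Tden_integral_close f g hc h j (ε / 2) (by linarith)
    obtain ⟨N, hN⟩ := exists_nat_gt (1 / η')
    refine ⟨N, fun m hmN => ?_⟩
    rw [Real.dist_eq, sub_zero, abs_of_nonneg (hE0 m j)]
    refine lt_of_le_of_lt (ciSup_le fun x => hcl (k m) ?_ x.1 x.2.1 x.2.2) (by linarith)
    intro y
    refine (hk m y).trans_lt ?_
    have h2 : (N : ℝ) ≤ m := by exact_mod_cast hmN
    rw [div_lt_iff₀ (by positivity)]
    rw [div_lt_iff₀ hη'] at hN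
    nlinarith
  have haB : Summable (fun j => a j * B j) := by
    have e1 := (summable_exp_abs (3 * η / 4) (by linarith)).mul_left Kg
    refine (e1.add hasum).congr (fun j => ?_)
    simp only [ha, hB]
    rw [mul_add, mul_one]
    congr 1
    rw [mul_left_comm, ← Real.exp_add]
    congr 2; ring
  have haE : ∀ m, Summable (fun j => a j * E m j) := fun m =>
    Summable.of_nonneg_of_le (fun j => mul_nonneg (ha0 j).le (hE0 m j))
      (fun j => mul_le_mul_of_nonneg_left (hEle m j) (ha0 j).le) haB
  have hlim : Tendsto (fun m => ∑' j, a j * E m j) atTop (nhds (∑' j : ℤ, (0:ℝ))) := by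
    apply tendsto_tsum_of_dominated_convergence haB
    · intro j
      simpa using (hElim j).const_mul (a j)
    · refine Eventually.of_forall (fun m j => ?_)
      rw [Real.norm_eq_abs, abs_of_nonneg (mul_nonneg (ha0 j).le (hE0 m j))]
      exact mul_le_mul_of_nonneg_left (hEle m j) (ha0 j).le
  rw [tsum_zero] at hlim
  set τ := min (1 / 2) (η / 4) with hτ
  have hτ0 : 0 < τ := by positivity
  have hτ1 : τ ≤ 1 / 2 := min_le_left _ _
  have hτ2 : τ ≤ η / 4 := min_le_right _ _
  obtain ⟨m, hmτ⟩ := (hlim.eventually (gt_mem_nhds hτ0)).exists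
  -- the density
  set T : ℤ → ℝ → ℝ := Tden f g ψ (k m) with hT
  obtain ⟨Mk, hMk0, hMk⟩ := periodic_bdd (k m).D_continuous (k m).D_periodic
  have hTb : ∀ j x, a j * T j x ≤ Kg * Kf * Mk * Real.exp (-(η / 2) * |(j : ℝ)|) := by
    intro j x
    have e1 := hKg' j (ψ ((f ^ j) x))
    have e2 := hKf j x
    have e3 := (le_abs_self _).trans (hMk ((f ^ j) x))
    have e4 : T j x ≤ (Kg * Real.exp (η / 4 * |(j : ℝ)|)) *
        (Mk * (Kf * Real.exp (η / 4 * |(j : ℝ)|))) := by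
      simp only [hT, Tden]
      rw [D_mul]
      have := (D_pos (k m) ((f ^ j) x)).le
      have := (D_pos (f ^ j) x).le
      gcongr
    calc a j * T j x ≤ a j * ((Kg * Real.exp (η / 4 * |(j : ℝ)|)) *
        (Mk * (Kf * Real.exp (η / 4 * |(j : ℝ)|)))) := mul_le_mul_of_nonneg_left e4 (ha0 j).le
      _ = Kg * Kf * Mk * (Real.exp (-η * |(j : ℝ)|) * Real.exp (η / 4 * |(j : ℝ)|) *
            Real.exp (η / 4 * |(j : ℝ)|)) := by simp only [ha]; ring
      _ = _ := by rw [← Real.exp_add, ← Real.exp_add]; congr 2; ring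
  have hT0 : ∀ j x, 0 < a j * T j x := fun j x => mul_pos (ha0 j) (Tden_pos f g ψ (k m) j x)
  have hTn : ∀ j x, ‖a j * T j x‖ ≤ Kg * Kf * Mk * Real.exp (-(η / 2) * |(j : ℝ)|) := by
    intro j x
    rw [Real.norm_eq_abs, abs_of_pos (hT0 j x)]
    exact hTb j x
  have hbsum : Summable (fun j : ℤ => Kg * Kf * Mk * Real.exp (-(η / 2) * |(j : ℝ)|)) :=
    (summable_exp_abs (η / 2) (by linarith)).mul_left _
  have hTc : ∀ j, Continuous (fun x => a j * T j x) := fun j =>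
    (Tden_continuous f g hc (k m) j).const_mul (a j)
  have hTs : ∀ x, Summable (fun j => a j * T j x) := fun x =>
    Summable.of_norm_bounded hbsum (fun j => hTn j x)
  set q : ℝ → ℝ := fun x => ∑' j, a j * T j x with hq
  have hqc : Continuous q := continuous_tsum hTc hbsum hTn
  have hq0 : ∀ x, 0 < q x := fun x =>
    (hTs x).tsum_pos (fun j => (hT0 j x).le) 0 (hT0 0 x)
  have hqp : Function.Periodic q 1 := by
    intro x
    simp only [hq, hT]
    congr 1; funext j
    rw [Tden_periodic f g h1]
  set H : ℝ → ℝ := fun x => ∫ t in (0:ℝ)..x, q t with hH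
  have hHd : ∀ x, HasDerivAt H (q x) x := fun x => (hqc.integral_hasStrictDerivAt 0 x).hasDerivAt
  have hHs : ∀ x, HasSum (fun j => a j * ∫ t in (0:ℝ)..x, T j t) (H x) := by
    intro x
    have e := intervalIntegral.hasSum_integral_of_dominated_convergence
      (μ := MeasureTheory.volume) (a := 0) (b := x) (f := q) (F := fun j t => a j * T j t)
      (fun j _ => Kg * Kf * Mk * Real.exp (-(η / 2) * |(j : ℝ)|))
      (fun j => (hTc j).aestronglyMeasurable)
      (fun j => Eventually.of_forall fun t _ => hTn j t)
      (Eventually.of_forall fun t _ => hbsum)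
      (continuous_const.intervalIntegrable _ _)
      (Eventually.of_forall fun t _ => (hTs t).hasSum)
    simpa only [intervalIntegral.integral_const_mul] using e
  have hHclose : ∀ x, 0 ≤ x → x ≤ 1 → |H x - S * (ψ x - ψ 0)| ≤ τ := by
    intro x hx0 hx1
    have e1 : HasSum (fun j => a j * ((∫ t in (0:ℝ)..x, T j t) - (ψ x - ψ 0)))
        (H x - S * (ψ x - ψ 0)) := by
      have := (hHs x).sub (hasum.hasSum.mul_right (ψ x - ψ 0))
      refine this.congr_fun ?_
      intro j; ring
    rw [← e1.tsum_eq, ← Real.norm_eq_abs]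
    refine (tsum_of_norm_bounded (haE m).hasSum ?_).trans hmτ.le
    intro j
    rw [norm_mul, Real.norm_eq_abs, Real.norm_eq_abs, abs_of_pos (ha0 j)]
    exact mul_le_mul_of_nonneg_left (hEx m j x hx0 hx1) (ha0 j).le
  set Z := H 1 with hZ
  have hZS : |Z - S| ≤ τ := by
    have := hHclose 1 zero_le_one le_rfl
    have e := h1 0
    rw [zero_add] at e
    rw [e] at this
    simpa using this
  have hZ' := abs_le.1 hZS
  have hZ0 : 1 / 2 ≤ Z := by linarith [hZ'.1]
  have hZp : 0 < Z := by linarith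
  have hH1 : ∀ x, H (x + 1) = H x + Z := by
    intro x
    simp only [hH, hZ]
    rw [← intervalIntegral.integral_add_adjacent_intervals (hqc.intervalIntegrable 0 x)
      (hqc.intervalIntegrable x (x + 1)), hqp.intervalIntegral_add_eq x 0, zero_add]
  refine ⟨ofDeriv (fun x => ψ 0 + H x / Z) (fun x => q x / Z)
    (fun x => ((hHd x).div_const Z).const_add (ψ 0)) (hqc.div_const Z)
    (fun x => div_pos (hq0 x) hZp) (fun x => by rw [hH1]; field_simp; ring), ?_, ?_⟩
  · have key : ∀ x, 0 ≤ x → x ≤ 1 → |ψ 0 + H x / Z - ψ x| ≤ η := by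
      intro x hx0 hx1
      have e1 := hψ01 x hx0 hx1
      have e2 := hHclose x hx0 hx1
      have e3 : ψ 0 + H x / Z - ψ x
          = ((H x - S * (ψ x - ψ 0)) + (ψ x - ψ 0) * (S - Z)) / Z := by
        field_simp; ring
      rw [e3, abs_div, abs_of_pos hZp, div_le_iff₀ hZp]
      have e4 : |(ψ x - ψ 0) * (S - Z)| ≤ 1 * τ := by
        rw [abs_mul, abs_of_nonneg e1.1, abs_sub_comm S Z]
        exact mul_le_mul e1.2 hZS (abs_nonneg _) zero_le_one
      have e5 := abs_add_le (H x - S * (ψ x - ψ 0)) ((ψ x - ψ 0) * (S - Z))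
      nlinarith
    intro x
    show |ψ 0 + H x / Z - ψ x| ≤ η
    have hper : Function.Periodic (fun x => ψ 0 + H x / Z - ψ x) 1 := by
      intro x
      simp only [hH1, h1]; field_simp; ring
    have e := hper.sub_int_mul_eq (x := x) ⌊x⌋
    rw [mul_one] at e
    have := key (x - ⌊x⌋) (Int.fract_nonneg x) (Int.fract_lt_one x).le
    rwa [e] at this
  · intro x
    have hD : ∀ y, (ofDeriv (fun x => ψ 0 + H x / Z) (fun x => q x / Z)
      (fun x => ((hHd x).div_const Z).const_add (ψ 0)) (hqc.div_const Z)
      (fun x => div_pos (hq0 x) hZp) (fun x => by rw [hH1]; field_simp; ring)).D y = q y / Z :=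
      fun y => (((hHd y).div_const Z).const_add (ψ 0)).deriv
    rw [hD, hD]
    have hs1 : q (f x) * f.D x = g.D (ψ x) * ∑' j, a j * T (j + 1) x := by
      simp only [hq]
      rw [← tsum_mul_right, ← tsum_mul_left]
      congr 1; funext j
      rw [mul_assoc, hT, Tden_shift h]; ring
    have hs2 : q x = ∑' j, a (j + 1) * T (j + 1) x :=
      ((Equiv.addRight (1:ℤ)).tsum_eq (fun j => a j * T j x)).symm
    have hs3 : Summable (fun j => a (j + 1) * T (j + 1) x) :=
      (Equiv.addRight (1:ℤ)).summable_iff.2 (hTs x)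
    have habs : ∀ j : ℤ, |(j : ℝ)| ≤ |((j + 1 : ℤ) : ℝ)| + 1 ∧ |((j + 1 : ℤ) : ℝ)| ≤ |(j : ℝ)| + 1 := by
      intro j
      push_cast
      constructor
      · have := abs_sub ((j : ℝ) + 1) 1
        simpa using this
      · have := abs_add_le (j : ℝ) 1
        simpa using this
    have hra : ∀ j, Real.exp (-η) * a (j + 1) ≤ a j ∧ a j ≤ Real.exp η * a (j + 1) := by
      intro j
      simp only [ha]
      rw [← Real.exp_add, ← Real.exp_add, Real.exp_le_exp, Real.exp_le_exp]
      constructor <;> nlinarith [(habs j).1, (habs j).2]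
    have hTp : ∀ j, 0 < T (j + 1) x := fun j => Tden_pos f g ψ (k m) (j + 1) x
    have hb2 : ∀ j, a j * T (j + 1) x ≤ Real.exp η * (a (j + 1) * T (j + 1) x) := by
      intro j
      rw [← mul_assoc]
      exact mul_le_mul_of_nonneg_right (hra j).2 (hTp j).le
    have hb1 : ∀ j, Real.exp (-η) * (a (j + 1) * T (j + 1) x) ≤ a j * T (j + 1) x := by
      intro j
      rw [← mul_assoc]
      exact mul_le_mul_of_nonneg_right (hra j).1 (hTp j).le
    have hs4 : Summable (fun j => a j * T (j + 1) x) :=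
      Summable.of_nonneg_of_le (fun j => mul_nonneg (ha0 j).le (hTp j).le) hb2 (hs3.mul_left _)
    have hc1 : Real.exp (-η) * q x ≤ ∑' j, a j * T (j + 1) x := by
      rw [hs2, ← tsum_mul_left]
      exact (hs3.mul_left _).tsum_le_tsum hb1 hs4
    have hc2 : ∑' j, a j * T (j + 1) x ≤ Real.exp η * q x := by
      rw [hs2, ← tsum_mul_left]
      exact hs4.tsum_le_tsum hb2 (hs3.mul_left _)
    have hgp := g.D_pos (ψ x)
    have e1 : q (f x) / Z * f.D x = (g.D (ψ x) * ∑' j, a j * T (j + 1) x) / Z := by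
      rw [← hs1]; ring
    rw [e1]
    constructor
    · rw [le_div_iff₀ hZp]
      calc Real.exp (-η) * (g.D (ψ x) * (q x / Z)) * Z
          = g.D (ψ x) * (Real.exp (-η) * q x) := by field_simp
        _ ≤ _ := mul_le_mul_of_nonneg_left hc1 hgp.le
    · rw [div_le_iff₀ hZp]
      calc g.D (ψ x) * ∑' j, a j * T (j + 1) x ≤ g.D (ψ x) * (Real.exp η * q x) :=
            mul_le_mul_of_nonneg_left hc2 hgp.le
        _ = Real.exp η * (g.D (ψ x) * (q x / Z)) * Z := by field_simp

theorem exists_conj_close (f g : CircleDiffeo) {ψ : ℝ → ℝ} (hc : Continuous ψ) (hm : Monotone ψ)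
    (h1 : ∀ x, ψ (x + 1) = ψ x + 1) (h : ∀ x, ψ (f x) = g (ψ x))
    (hfs : ∀ δ > 0, ∃ K > 0, ∀ (j : ℤ) (x : ℝ), (f ^ j).D x ≤ K * Real.exp (δ * |(j : ℝ)|))
    (hgs : ∀ δ > 0, ∃ K > 0, ∀ (j : ℤ) (x : ℝ), (g ^ j).D x ≤ K * Real.exp (δ * |(j : ℝ)|))
    (ε : ℝ) (hε : 0 < ε) :
    ∃ k : CircleDiffeo, distC1 (k * f * k⁻¹).toFun g.toFun ≤ ε := by
  obtain ⟨C, hC0, hC⟩ := periodic_bdd g.D_continuous g.D_periodic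
  obtain ⟨δ1, hδ1, hu1⟩ := periodic_unifCont g.D_continuous g.D_periodic (ε / 4) (by linarith)
  obtain ⟨δ2, hδ2, hu2⟩ := deg_one_unifCont g.continuous g.commute_translation (ε / 4)
    (by linarith)
  obtain ⟨η, hη, hη1, hη2, hη3, hη4, hη5⟩ : ∃ η > 0, η < δ1 ∧ η < δ2 ∧ η ≤ 1 ∧ η ≤ ε / 4 ∧
      2 * η * C ≤ ε / 4 := by
    have e1 : 0 < min (δ1 / 2) (min (δ2 / 2) (min 1 (min (ε / 4) (ε / (8 * C))))) := by positivity
    refine ⟨_, e1, ?_, ?_, ?_, ?_, ?_⟩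
    · exact (min_le_left _ _).trans_lt (by linarith)
    · exact ((min_le_right _ _).trans (min_le_left _ _)).trans_lt (by linarith)
    · exact (min_le_right _ _).trans ((min_le_right _ _).trans (min_le_left _ _))
    · exact (min_le_right _ _).trans ((min_le_right _ _).trans ((min_le_right _ _).trans
        (min_le_left _ _)))
    · have e2 : min (δ1 / 2) (min (δ2 / 2) (min 1 (min (ε / 4) (ε / (8 * C))))) ≤ ε / (8 * C) :=
        (min_le_right _ _).trans ((min_le_right _ _).trans ((min_le_right _ _).trans
          (min_le_right _ _)))
      rw [le_div_iff₀ (by positivity)] at e2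
      linarith
  obtain ⟨k, hk, hD⟩ := main_construction f g hc hm h1 h hfs hgs η hη
  refine ⟨k, ?_⟩
  have hA : ∀ y, |(k * f * k⁻¹) y - g y| ≤ ε / 2 := by
    intro y
    obtain ⟨x, rfl⟩ := k.surjective y
    rw [mul_apply, inv_apply_self, mul_apply]
    have e1 := abs_le.1 (hk (f x))
    have e2 := abs_lt.1 (hu2 (k x) (ψ x) ((hk x).trans_lt hη2))
    rw [h] at e1
    rw [abs_le]
    constructor <;> linarith [e1.1, e1.2, e2.1, e2.2]
  have hBd : ∀ y, |(k * f * k⁻¹).D y - g.D y| ≤ ε / 2 := by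
    intro y
    obtain ⟨x, rfl⟩ := k.surjective y
    have hkx := k.D_pos x
    have e0 : (k * f * k⁻¹).D (k x) = k.D (f x) * f.D x / k.D x := by
      rw [D_mul, inv_apply_self, D_mul, D_inv]; rfl
    have e1 : Real.exp (-η) * g.D (ψ x) ≤ (k * f * k⁻¹).D (k x) := by
      rw [e0, le_div_iff₀ hkx, mul_assoc]; exact (hD x).1
    have e2 : (k * f * k⁻¹).D (k x) ≤ Real.exp η * g.D (ψ x) := by
      rw [e0, div_le_iff₀ hkx, mul_assoc]; exact (hD x).2
    have e3 := abs_lt.1 (hu1 (k x) (ψ x) ((hk x).trans_lt hη1))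
    have e4 : Real.exp η - 1 ≤ 2 * η := by
      have := Real.abs_exp_sub_one_le (x := η) (by rw [abs_of_pos hη]; exact hη3)
      rw [abs_of_pos hη] at this
      exact (le_abs_self _).trans this
    have e5 : 1 - 2 * η ≤ Real.exp (-η) := by linarith [Real.add_one_le_exp (-η)]
    have e6 := (le_abs_self _).trans (hC (ψ x))
    have e7 := g.D_pos (ψ x)
    have e8 : 2 * η * g.D (ψ x) ≤ ε / 4 := le_trans (by gcongr) hη5
    have e9 : Real.exp η * g.D (ψ x) ≤ (1 + 2 * η) * g.D (ψ x) := by gcongr; linarith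
    have e10 : (1 - 2 * η) * g.D (ψ x) ≤ Real.exp (-η) * g.D (ψ x) := by gcongr
    rw [abs_le]
    constructor <;> linarith [e3.1, e3.2]
  have hne : Nonempty (Icc (0:ℝ) 1) := ⟨⟨0, by simp⟩⟩
  have h3 : distC1 (k * f * k⁻¹).toFun g.toFun ≤ ε / 2 + ε / 2 :=
    add_le_add (ciSup_le fun x => hA x.1) (ciSup_le fun x => hBd x.1)
  linarith

/-- **Theorem.** Let `f` and `g` be `C¹`-diffeomorphisms of `S¹` with the same irrational
rotation number `α`, both with dense orbits. If for every `ε > 0` there are `g̃`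
`ε`-`C¹`-close to `g`, an integer `n` and adapted orbit segments of `f` and `g̃` of
length `n` which are similarly ordered and have the same initial and final ratios,
then there are diffeomorphisms `hₘ` with `hₘ ∘ f ∘ hₘ⁻¹ → g` in the `C¹` topology. -/
theorem conjugates_converge (α : ℝ) (hα : Irrational α) (f g : CircleDiffeo)
    (hf : hasRotationNumber f α) (hg : hasRotationNumber g α)
    (hfd : DenseOrbits f.toFun) (hgd : DenseOrbits g.toFun)
    (hyp : ∀ ε : ℝ, 0 < ε → ∃ gt : CircleDiffeo, distC1 gt.toFun g.toFun < ε ∧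
      ∃ (n : ℕ) (x y : ℝ) (i j i' j' : ℕ),
        IsAdaptedSeg f.toFun x n i j ∧ IsAdaptedSeg gt.toFun y n i' j' ∧
        SimilarlyOrdered (fun k => f.toFun^[k] x) (fun k => gt.toFun^[k] y) n ∧
        initialRatio f.toFun x n i j = initialRatio gt.toFun y n i' j' ∧
        finalRatio f.toFun x n i j = finalRatio gt.toFun y n i' j') :
    ∃ h fh : ℕ → CircleDiffeo,
      (∀ m : ℕ, ∀ x : ℝ, (fh m).toFun ((h m).toFun x) = (h m).toFun (f.toFun x)) ∧
      Tendsto (fun m : ℕ => distC1 (fh m).toFun g.toFun) atTop (nhds 0) := by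
  have hfs := fun δ hδ => f.subexp (f.no_periodic hα hf) hfd δ hδ
  have hgs := fun δ hδ => g.subexp (g.no_periodic hα hg) hgd δ hδ
  obtain ⟨ψ, hc, hm, h1, h⟩ := exists_semiconj f g hf hg hgd
  have key : ∀ m : ℕ, ∃ k : CircleDiffeo,
      distC1 (k * f * k⁻¹).toFun g.toFun ≤ 1 / ((m : ℝ) + 1) := fun m =>
    exists_conj_close f g hc hm h1 h hfs hgs _ (by positivity)
  choose k hk using key
  refine ⟨k, fun m => k m * f * (k m)⁻¹, fun m x => ?_, ?_⟩
  · rw [CircleDiffeo.mul_apply, CircleDiffeo.inv_apply_self, CircleDiffeo.mul_apply]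
  · refine squeeze_zero (fun m => ?_) hk tendsto_one_div_add_atTop_nhds_zero_nat
    exact add_nonneg (Real.iSup_nonneg fun _ => abs_nonneg _) (Real.iSup_nonneg fun _ => abs_nonneg _)
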